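/- Let (Ω, P) be a probability space, let N > K ≥ 1 be integers, β̂ > 0, and let X : Ω → ℝ have the Gamma distribution with integer shape N−K+1 and scale β̂. Let Y : Ω → ℝ be independent of X, with Y ≥ 0 almost surely and integrable. Let α > 0 and C ≥ 0, and define R(p) = E[ log₂( 1 + α²·p·X/(α²·p·C·X + p·Y + 1) ) ] for p ≥ 0. Then R has right derivative at p = 0 (derivative within [0, ∞)) equal to α²·(N−K+1)·β̂ / ln 2. -/

import Mathlib

open MeasureTheory ProbabilityTheory

/-!
For a link with signal gain `g` and interference gain `h`, both nonnegative, the rate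
`log (1 + g * p / (h * p + 1))` vanishes at `p = 0`, has derivative `g` there, and never exceeds
`g * p`: interference is only a second-order effect at low power. When the mean gain is finite,
dominated convergence applied to the difference quotients lets the derivative pass through the
expectation, so the slope of the ergodic rate is the mean gain. For the gamma distribution, the mean
is shape over rate.
-/

open Set Filter Topology

section ParametricIntegral

variable {Ω 𝕜 E : Type*} [MeasurableSpace Ω] {μ : Measure Ω} [RCLike 𝕜]
  [NormedAddCommGroup E] [NormedSpace ℝ E] [NormedSpace 𝕜 E]

theorem slope_integral {F : 𝕜 → Ω → E} {x₀ x : 𝕜} (hx₀ : Integrable (F x₀) μ)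
    (hx : Integrable (F x) μ) :
    slope (fun x ↦ ∫ ω, F x ω ∂μ) x₀ x = ∫ ω, slope (F · ω) x₀ x ∂μ := by
  simp only [slope_def_module, integral_smul, integral_sub hx hx₀]

theorem hasDerivWithinAt_integral_of_dominated {F : 𝕜 → Ω → E} {F' : Ω → E} {s : Set 𝕜} {x₀ : 𝕜}
    {bound : Ω → ℝ} (hF_meas : ∀ᶠ x in 𝓝[s] x₀, AEStronglyMeasurable (F x) μ)
    (hF_int : Integrable (F x₀) μ)
    (h_bound : ∀ᶠ x in 𝓝[s] x₀, ∀ᵐ ω ∂μ, ‖F x ω - F x₀ ω‖ ≤ bound ω * ‖x - x₀‖)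
    (bound_integrable : Integrable bound μ)
    (h_diff : ∀ᵐ ω ∂μ, HasDerivWithinAt (F · ω) (F' ω) s x₀) :
    HasDerivWithinAt (fun x ↦ ∫ ω, F x ω ∂μ) (∫ ω, F' ω ∂μ) s x₀ := by
  have hle : 𝓝[s \ {x₀}] x₀ ≤ 𝓝[s] x₀ := nhdsWithin_mono _ sdiff_subset
  have h_int : ∀ᶠ x in 𝓝[s] x₀, Integrable (F x) μ := by
    filter_upwards [hF_meas, h_bound] with x hx_meas hx_bound
    refine integrable_of_norm_sub_le hx_meas hF_int (bound_integrable.mul_const ‖x - x₀‖) ?_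
    simpa only [norm_sub_rev (F x₀ _)] using hx_bound
  rw [hasDerivWithinAt_iff_tendsto_slope]
  refine Tendsto.congr'
    (hle <| h_int.mono fun x hx ↦ (slope_integral hF_int hx).symm) ?_
  refine tendsto_integral_filter_of_dominated_convergence bound ?_ ?_ bound_integrable ?_
  · filter_upwards [hle hF_meas] with x hx
    simp only [slope_def_module]
    exact (hx.sub hF_int.1).const_smul (x - x₀)⁻¹
  · filter_upwards [hle h_bound, self_mem_nhdsWithin] with x hx_bound hx
    have hpos : 0 < ‖x - x₀‖ := norm_sub_pos_iff.mpr hx.2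
    filter_upwards [hx_bound] with ω hω
    rwa [slope_def_module, norm_smul, norm_inv, inv_mul_le_iff₀ hpos, mul_comm]
  · exact h_diff.mono fun ω hω ↦ hasDerivWithinAt_iff_tendsto_slope.mp hω

end ParametricIntegral

section GammaMoments

variable {a r : ℝ}

theorem integral_gammaMeasure {E : Type*} [NormedAddCommGroup E] [NormedSpace ℝ E]
    (ha : 0 < a) (hr : 0 < r) (f : ℝ → E) :
    ∫ x, f x ∂gammaMeasure a r =
      ∫ x in Ioi 0, (r ^ a / Real.Gamma a * x ^ (a - 1) * Real.exp (-(r * x))) • f x := by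
  have hmeas : Measurable (gammaPDF a r) := (measurable_gammaPDFReal a r).ennreal_ofReal
  have hdensity (x : ℝ) : (gammaPDF a r x).toReal • f x = (Ici 0).indicator
      (fun x ↦ (r ^ a / Real.Gamma a * x ^ (a - 1) * Real.exp (-(r * x))) • f x) x := by
    rw [gammaPDF, ENNReal.toReal_ofReal (gammaPDFReal_nonneg ha hr x)]
    by_cases hx : 0 ≤ x <;> simp [gammaPDFReal, hx]
  rw [gammaMeasure, integral_withDensity_eq_integral_toReal_smul hmeas
    (.of_forall fun _ ↦ ENNReal.ofReal_lt_top)]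
  simp_rw [hdensity]
  rw [integral_indicator measurableSet_Ici, integral_Ici_eq_integral_Ioi]

theorem integral_rpow_gammaMeasure {s : ℝ} (ha : 0 < a) (hr : 0 < r) (has : 0 < a + s) :
    ∫ x, x ^ s ∂gammaMeasure a r = Real.Gamma (a + s) / (Real.Gamma a * r ^ s) := by
  have hmul : EqOn
      (fun x ↦ (r ^ a / Real.Gamma a * x ^ (a - 1) * Real.exp (-(r * x))) • x ^ s)
      (fun x ↦ r ^ a / Real.Gamma a * (x ^ (a + s - 1) * Real.exp (-(r * x)))) (Ioi 0) := by
    intro x (hx : 0 < x)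
    dsimp only
    rw [add_sub_right_comm, Real.rpow_add hx, smul_eq_mul]
    ring
  rw [integral_gammaMeasure ha hr, setIntegral_congr_fun measurableSet_Ioi hmul,
    integral_const_mul, Real.integral_rpow_mul_exp_neg_mul_Ioi has hr,
    Real.div_rpow zero_le_one hr.le, Real.one_rpow, Real.rpow_add hr]
  field_simp

theorem integral_id_gammaMeasure (ha : 0 < a) (hr : 0 < r) :
    ∫ x, x ∂gammaMeasure a r = a / r := by
  have hmoment := integral_rpow_gammaMeasure (s := 1) ha hr (by positivity)
  simp only [Real.rpow_one, Real.Gamma_add_one ha.ne'] at hmoment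
  rw [hmoment, mul_comm a, mul_div_mul_left _ _ (Real.Gamma_pos_of_pos ha).ne']

theorem integrable_id_gammaMeasure (ha : 0 < a) (hr : 0 < r) :
    Integrable (fun x ↦ x) (gammaMeasure a r) :=
  .of_integral_ne_zero <| by rw [integral_id_gammaMeasure ha hr]; positivity

theorem ae_nonneg_gammaMeasure (a r : ℝ) : ∀ᵐ x ∂gammaMeasure a r, 0 ≤ x := by
  have hmeas : Measurable (gammaPDF a r) := (measurable_gammaPDFReal a r).ennreal_ofReal
  rw [gammaMeasure, ae_withDensity_iff hmeas]
  exact .of_forall fun x hx ↦ not_lt.mp fun hneg ↦ hx (gammaPDF_of_neg hneg)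

end GammaMoments

/-- The signal-to-interference-plus-noise ratio at transmit power `p` of a link with signal gain `g`
and interference gain `h`. The noise power is normalized to one. -/
noncomputable def sinr (g h p : ℝ) : ℝ :=
  g * p / (h * p + 1)

section Sinr

variable {g h p : ℝ}

@[simp]
theorem sinr_zero (g h : ℝ) : sinr g h 0 = 0 := by
  simp [sinr]

theorem sinr_nonneg (hg : 0 ≤ g) (hh : 0 ≤ h) (hp : 0 ≤ p) : 0 ≤ sinr g h p := by
  unfold sinr
  positivity

theorem sinr_le_mul (hg : 0 ≤ g) (hh : 0 ≤ h) (hp : 0 ≤ p) : sinr g h p ≤ g * p :=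
  div_le_self (by positivity) (le_add_of_nonneg_left (by positivity))

theorem hasDerivAt_sinr_zero (g h : ℝ) : HasDerivAt (sinr g h) g 0 := by
  have hnum : HasDerivAt (fun p ↦ g * p) g 0 := hasDerivAt_const_mul g
  have hden : HasDerivAt (fun p ↦ h * p + 1) h 0 := (hasDerivAt_const_mul h).add_const 1
  simpa [sinr] using! hnum.div hden (by simp)

theorem hasDerivAt_log_one_add_sinr_zero (g h : ℝ) :
    HasDerivAt (fun p ↦ Real.log (1 + sinr g h p)) g 0 := by
  simpa using ((hasDerivAt_sinr_zero g h).const_add 1).log (by simp)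

theorem abs_log_one_add_sinr_le (hg : 0 ≤ g) (hh : 0 ≤ h) (hp : 0 ≤ p) :
    |Real.log (1 + sinr g h p)| ≤ g * p := by
  have hsinr : 0 ≤ sinr g h p := sinr_nonneg hg hh hp
  calc |Real.log (1 + sinr g h p)|
      = Real.log (1 + sinr g h p) := abs_of_nonneg (Real.log_nonneg (by linarith))
    _ ≤ sinr g h p := by linarith [Real.log_le_sub_one_of_pos (x := 1 + sinr g h p) (by linarith)]
    _ ≤ g * p := sinr_le_mul hg hh hp

theorem hasDerivWithinAt_integral_log_one_add_sinr {Ω : Type*} [MeasurableSpace Ω]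
    {μ : Measure Ω} {G H : Ω → ℝ} (hG : Integrable G μ) (hH : AEMeasurable H μ)
    (hG_nonneg : ∀ᵐ ω ∂μ, 0 ≤ G ω) (hH_nonneg : ∀ᵐ ω ∂μ, 0 ≤ H ω) :
    HasDerivWithinAt (fun p ↦ ∫ ω, Real.log (1 + sinr (G ω) (H ω) p) ∂μ) (∫ ω, G ω ∂μ)
      (Ici 0) 0 := by
  refine hasDerivWithinAt_integral_of_dominated (bound := G) ?_ (by simp) ?_ hG ?_
  · have hG_meas : AEMeasurable G μ := hG.aemeasurable
    refine .of_forall fun p ↦ AEMeasurable.aestronglyMeasurable ?_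
    unfold sinr
    fun_prop
  · filter_upwards [self_mem_nhdsWithin] with p (hp : 0 ≤ p)
    filter_upwards [hG_nonneg, hH_nonneg] with ω hg hh
    simpa [abs_of_nonneg hp] using abs_log_one_add_sinr_le hg hh hp
  · exact .of_forall fun ω ↦ (hasDerivAt_log_one_add_sinr_zero _ _).hasDerivWithinAt

end Sinr

theorem rate_right_deriv_at_zero_general {Ω : Type*} [MeasurableSpace Ω] {μ : Measure Ω}
    {X Y : Ω → ℝ} (hX : Integrable X μ) (hY : AEMeasurable Y μ)
    (hX_nonneg : ∀ᵐ ω ∂μ, 0 ≤ X ω) (hY_nonneg : ∀ᵐ ω ∂μ, 0 ≤ Y ω)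
    (α : ℝ) {C : ℝ} (hC : 0 ≤ C) :
    HasDerivWithinAt
      (fun p : ℝ => ∫ ω, Real.logb 2
        (1 + α ^ 2 * p * X ω / (α ^ 2 * p * C * X ω + p * Y ω + 1)) ∂μ)
      (α ^ 2 * (∫ ω, X ω ∂μ) / Real.log 2) (Ici 0) 0 := by
  have hinterference : ∀ᵐ ω ∂μ, 0 ≤ α ^ 2 * C * X ω + Y ω := by
    filter_upwards [hX_nonneg, hY_nonneg] with ω hx hy
    positivity
  have hrate (p : ℝ) : ∫ ω, Real.logb 2
        (1 + α ^ 2 * p * X ω / (α ^ 2 * p * C * X ω + p * Y ω + 1)) ∂μ =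
      (∫ ω, Real.log (1 + sinr (α ^ 2 * X ω) (α ^ 2 * C * X ω + Y ω) p) ∂μ) / Real.log 2 := by
    rw [← integral_div]
    congr with ω
    rw [Real.logb, sinr]
    ring_nf
  simp_rw [hrate]
  rw [← integral_const_mul]
  exact (hasDerivWithinAt_integral_log_one_add_sinr (hX.const_mul (α ^ 2))
    ((hX.aemeasurable.const_mul (α ^ 2 * C)).add hY)
    (hX_nonneg.mono fun ω hx ↦ by positivity) hinterference).div_const (Real.log 2)

/-- Let X have the Gamma distribution with integer shape N−K+1 and scale
β̂ > 0 and let Y ≥ 0 a.s. be integrable and independent of X. With α > 0 and C ≥ 0,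
the ergodic rate R(p) = E[log₂(1 + α²·p·X/(α²·p·C·X + p·Y + 1))] has right derivative
α²·(N−K+1)·β̂/ln 2 at p = 0. -/
theorem rate_right_deriv_at_zero {Ω : Type*} [MeasurableSpace Ω] (P : Measure Ω)
    [IsProbabilityMeasure P] (N K : ℕ) (hK : 1 ≤ K) (hNK : K < N) (βh : ℝ) (hβ : 0 < βh)
    (X Y : Ω → ℝ) (hXm : Measurable X) (hYm : Measurable Y)
    (hX : Measure.map X P = gammaMeasure (N - K + 1 : ℕ) (1 / βh))
    (hindep : IndepFun X Y P)
    (hYpos : ∀ᵐ ω ∂P, 0 ≤ Y ω) (hYint : Integrable Y P)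
    (α C : ℝ) (hα : 0 < α) (hC : 0 ≤ C) :
    HasDerivWithinAt
      (fun p : ℝ => ∫ ω, Real.logb 2
        (1 + α ^ 2 * p * X ω / (α ^ 2 * p * C * X ω + p * Y ω + 1)) ∂P)
      (α ^ 2 * ((N : ℝ) - K + 1) * βh / Real.log 2) (Set.Ici 0) 0 := by
  have hlaw : MeasurePreserving X P (gammaMeasure (N - K + 1 : ℕ) (1 / βh)) := ⟨hXm, hX⟩
  have hshape : (0 : ℝ) < (N - K + 1 : ℕ) := by positivity
  have hrate : 0 < 1 / βh := by positivity
  have hmean : ∫ ω, X ω ∂P = ((N : ℝ) - K + 1) * βh := by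
    rw [hlaw.hasLaw.integral_eq, integral_id_gammaMeasure hshape hrate, div_div_eq_mul_div, div_one,
      Nat.cast_add_one, Nat.cast_sub hNK.le]
  have hX_int : Integrable X P :=
    hlaw.integrable_comp_of_integrable (integrable_id_gammaMeasure hshape hrate)
  have hX_nonneg : ∀ᵐ ω ∂P, 0 ≤ X ω :=
    hlaw.quasiMeasurePreserving.ae (ae_nonneg_gammaMeasure _ _)
  simpa only [hmean, mul_assoc] using
    rate_right_deriv_at_zero_general hX_int hYm.aemeasurable hX_nonneg hYpos α hC
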